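/- Let a ∈ ℂ with |a| = 1 and a ≠ 1 a primitive n-th root of unity. Then the numerical range of C_{az} on F² equals the convex hull of {1, a, a², ..., a^{n-1}} (the filled regular-type polygon with these vertices; the interval [-1,1] when n = 2). -/

import Mathlib

open MeasureTheory Complex

/-- The Gaussian measure `π⁻¹ e^{-|z|²} dA(z)` on `ℂ`. -/
noncomputable def gaussMeasure : Measure ℂ :=
  (volume : Measure ℂ).withDensity fun z => ENNReal.ofReal (Real.exp (-(‖z‖ ^ 2)) / Real.pi)

/-- A function is entire if it is differentiable on all of `ℂ`. -/
def Entire (f : ℂ → ℂ) : Prop := Differentiable ℂ f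

/-- The squared Fock-space norm `∫ |f|² dμ`. -/
noncomputable def fockNormSq (f : ℂ → ℂ) : ℝ := ∫ z, ‖f z‖ ^ 2 ∂gaussMeasure

/-- Membership in the Fock space `F²`: entire and square integrable w.r.t. the Gaussian. -/
def MemFock (f : ℂ → ℂ) : Prop :=
  Entire f ∧ Integrable (fun z => ‖f z‖ ^ 2) gaussMeasure

/-- The Fock-space inner product `⟨f, g⟩ = ∫ f ḡ dμ`. -/
noncomputable def fockInner (f g : ℂ → ℂ) : ℂ :=
  ∫ z, f z * (starRingEnd ℂ) (g z) ∂gaussMeasure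

/-- The weighted composition operator `C_{ψ,φ} f = ψ · (f ∘ φ)`. -/
def wcomp (ψ φ f : ℂ → ℂ) : ℂ → ℂ := fun z => ψ z * f (φ z)

/-- Boundedness of `C_{ψ,φ}` on `F²`. -/
def BoundedWCO (ψ φ : ℂ → ℂ) : Prop :=
  ∃ C : ℝ, ∀ f, MemFock f →
    MemFock (wcomp ψ φ f) ∧ fockNormSq (wcomp ψ φ f) ≤ C * fockNormSq f

/-- The numerical range `W(C_{ψ,φ}) = {⟨C_{ψ,φ} f, f⟩ : ‖f‖ = 1}` on `F²`. -/
noncomputable def numRange (ψ φ : ℂ → ℂ) : Set ℂ :=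
  {w | ∃ f, MemFock f ∧ fockNormSq f = 1 ∧ w = fockInner (wcomp ψ φ f) f}

/-- The point spectrum of `C_{ψ,φ}` on `F²`. -/
def pointSpectrum (ψ φ : ℂ → ℂ) : Set ℂ :=
  {lam | ∃ f, MemFock f ∧ f ≠ 0 ∧ wcomp ψ φ f = fun z => lam * f z}

/-- Compactness of `C_{ψ,φ}` on `F²`: it is bounded and the image of every sequence in the
unit ball of `F²` has a subsequence which is Cauchy in the `F²` norm. -/
def CompactWCO (ψ φ : ℂ → ℂ) : Prop :=
  BoundedWCO ψ φ ∧ ∀ f : ℕ → ℂ → ℂ, (∀ k, MemFock (f k) ∧ fockNormSq (f k) ≤ 1) →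
    ∃ g : ℕ → ℕ, StrictMono g ∧ ∀ ε : ℝ, 0 < ε → ∃ N : ℕ, ∀ i, N ≤ i → ∀ j, N ≤ j →
      fockNormSq (fun z => wcomp ψ φ (f (g i)) z - wcomp ψ φ (f (g j)) z) < ε

/-!
If a linear isometry `T` of an inner product space satisfies `T ^ n = 1`, then `T` is annihilated by
`X ^ n - 1 = ∏ (X - ζ)`, so every vector is a sum of pairwise orthogonal eigenvectors `x_μ`. Hence
`⟨T x, x⟩ = ∑ ‖x_μ‖² μ`, and for `‖x‖ = 1` the weights `‖x_μ‖²` sum to `1` and are otherwise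
arbitrary: the numerical range is the convex hull of the eigenvalues. The operator `C_{az}` is such
an isometry because the Gaussian measure is rotation invariant, its eigenvalues are `n`-th roots of
unity, and each `a ^ k` occurs, with eigenfunction `z ^ k`.
-/

section NumericalRange

open Module.End Polynomial ComplexConjugate

/-- The numerical range of a linear endomorphism `T` of an inner product space: the values of the
quadratic form of `T` at unit vectors. As Mathlib's inner product is linear in its second argument,
the paper's `⟨T x, x⟩` is `inner 𝕜 x (T x)`. -/
def numericalRange {𝕜 E : Type*} [RCLike 𝕜] [SeminormedAddCommGroup E] [InnerProductSpace 𝕜 E]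
    (T : Module.End 𝕜 E) : Set 𝕜 :=
  {w | ∃ x, ‖x‖ = 1 ∧ inner 𝕜 x (T x) = w}

theorem iSup_eigenspace_eq_ker_aeval_prod {K V : Type*} [Field K] [AddCommGroup V] [Module K V]
    (T : Module.End K V) (s : Finset K) :
    ⨆ μ ∈ s, eigenspace T μ = LinearMap.ker (aeval T (∏ μ ∈ s, (X - C μ))) := by
  classical
  induction s using Finset.induction_on with
  | empty => simp [one_eq_id]
  | insert μ s hμ ih =>
    have hcop : IsCoprime (X - C μ) (∏ ν ∈ s, (X - C ν)) := IsCoprime.prod_right fun ν hν =>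
      isCoprime_X_sub_C_of_isUnit_sub (sub_ne_zero.2 (ne_of_mem_of_not_mem hν hμ).symm).isUnit
    rw [Finset.iSup_insert, ih, Finset.prod_insert hμ,
      ← sup_ker_aeval_eq_ker_aeval_mul_of_coprime T hcop, eigenspace_def]
    simp [Algebra.algebraMap_eq_smul_one]

theorem iSup_eigenspace_eq_top_of_pow_eq_one {K V : Type*} [Field K] [AddCommGroup V] [Module K V]
    {T : Module.End K V} {a : K} {n : ℕ} (hn : 0 < n) (ha : IsPrimitiveRoot a n)
    (hT : T ^ n = 1) : ⨆ μ, eigenspace T μ = ⊤ := by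
  have hker : ⨆ μ ∈ nthRootsFinset n (1 : K), eigenspace T μ = ⊤ := by
    rw [iSup_eigenspace_eq_ker_aeval_prod, ← X_pow_sub_one_eq_prod hn ha]
    simp [hT]
  exact top_unique (hker.symm.trans_le (iSup_mono fun _ => iSup_le fun _ => le_rfl))

theorem pow_eq_one_of_hasEigenvalue {K V : Type*} [Field K] [AddCommGroup V] [Module K V]
    {T : Module.End K V} {μ : K} {n : ℕ} (hT : T ^ n = 1) (hμ : HasEigenvalue T μ) :
    μ ^ n = 1 := by
  obtain ⟨x, hx⟩ := hμ.exists_hasEigenvector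
  have h : (μ ^ n - 1) • x = 0 := by
    rw [sub_smul, ← hx.pow_apply, hT, one_apply, one_smul, sub_self]
  exact sub_eq_zero.1 ((smul_eq_zero.1 h).resolve_right hx.2)

variable {𝕜 E : Type*} [RCLike 𝕜] [NormedAddCommGroup E] [InnerProductSpace 𝕜 E]

theorem norm_eq_one_of_hasEigenvector_isometry {T : E →ₗᵢ[𝕜] E} {μ : 𝕜} {x : E}
    (hx : HasEigenvector T.toLinearMap μ x) : ‖μ‖ = 1 := by
  have h : ‖μ‖ * ‖x‖ = ‖x‖ := by
    rw [← norm_smul, ← hx.apply_eq_smul]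
    exact T.norm_map x
  exact (mul_eq_right₀ (norm_ne_zero_iff.2 hx.2)).1 h

theorem orthogonalFamily_eigenspaces_isometry (T : E →ₗᵢ[𝕜] E) :
    OrthogonalFamily 𝕜 (fun μ => eigenspace T.toLinearMap μ)
      fun μ => (eigenspace T.toLinearMap μ).subtypeₗᵢ := by
  rintro μ ν hμν ⟨x, hx⟩ ⟨y, hy⟩
  by_contra hxy
  have hx0 : x ≠ 0 := by
    rintro rfl
    simp at hxy
  have hμ : conj μ * μ = 1 := by
    rw [RCLike.conj_mul, norm_eq_one_of_hasEigenvector_isometry ⟨hx, hx0⟩]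
    simp
  have hν : conj μ * ν = 1 := by
    have h : inner 𝕜 (μ • x) (ν • y) = inner 𝕜 x y := by
      rw [← mem_eigenspace_iff.1 hx, ← mem_eigenspace_iff.1 hy]
      exact T.inner_map_map x y
    rw [inner_smul_left, inner_smul_right, ← mul_assoc] at h
    exact (mul_eq_right₀ hxy).1 h
  exact hμν (mul_left_cancel₀ (left_ne_zero_of_mul_eq_one hμ) (hμ.trans hν.symm))

theorem exists_mem_eigenspace_norm_eq_one {T : Module.End 𝕜 E} {μ : 𝕜} (hμ : HasEigenvalue T μ) :
    ∃ v : eigenspace T μ, ‖v‖ = 1 := by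
  obtain ⟨x, hx⟩ := hμ.exists_hasEigenvector
  exact ⟨⟨_, (eigenspace T μ).smul_mem (‖x‖⁻¹ : 𝕜) hx.1⟩, norm_smul_inv_norm hx.2⟩

section Orthogonal

variable {T : Module.End 𝕜 E}
  (hT : OrthogonalFamily 𝕜 (fun μ => eigenspace T μ) fun μ => (eigenspace T μ).subtypeₗᵢ)
include hT

theorem inner_sum_apply_sum_of_mem_eigenspace (s : Finset 𝕜) (x : ∀ μ, eigenspace T μ) :
    inner 𝕜 (∑ μ ∈ s, (x μ : E)) (T (∑ μ ∈ s, (x μ : E))) = ∑ μ ∈ s, ‖x μ‖ ^ 2 • μ := by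
  have hTx : T (∑ μ ∈ s, (x μ : E)) = ∑ μ ∈ s, ((μ • x μ : eigenspace T μ) : E) := by
    rw [map_sum]
    exact Finset.sum_congr rfl fun μ _ => mem_eigenspace_iff.1 (x μ).2
  rw [hTx]
  refine (hT.inner_sum x (fun μ => μ • x μ) s).trans (Finset.sum_congr rfl fun μ _ => ?_)
  rw [inner_smul_right, inner_self_eq_norm_sq_to_K, RCLike.real_smul_eq_coe_mul, mul_comm]
  norm_cast

theorem convexHull_eigenvalues_subset_numericalRange :
    convexHull ℝ {μ | HasEigenvalue T μ} ⊆ numericalRange T := by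
  choose! v hv using fun μ => exists_mem_eigenspace_norm_eq_one (T := T) (μ := μ)
  intro w hw
  rw [convexHull_eq_union_convexHull_finite_subsets] at hw
  simp only [Set.mem_iUnion, Finset.mem_convexHull'] at hw
  obtain ⟨s, hs, t, ht, ht1, rfl⟩ := hw
  let x : ∀ μ, eigenspace T μ := fun μ => (√(t μ) : 𝕜) • v μ
  have hx : ∀ μ ∈ s, ‖x μ‖ ^ 2 = t μ := fun μ hμ => by
    simp [x, norm_smul, hv μ (hs hμ), Real.sq_sqrt (ht μ hμ)]
  refine ⟨∑ μ ∈ s, (x μ : E), ?_, ?_⟩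
  · rw [← sq_eq_sq₀ (norm_nonneg _) zero_le_one, one_pow, ← ht1, ← Finset.sum_congr rfl hx]
    exact hT.norm_sum x s
  · rw [inner_sum_apply_sum_of_mem_eigenspace hT]
    exact Finset.sum_congr rfl fun μ hμ => by rw [hx μ hμ]

theorem numericalRange_subset_convexHull_eigenvalues (hspan : ⨆ μ, eigenspace T μ = ⊤) :
    numericalRange T ⊆ convexHull ℝ {μ | HasEigenvalue T μ} := by
  rintro _ ⟨x, hx, rfl⟩
  obtain ⟨f, hf, rfl⟩ := (Submodule.mem_iSup_iff_exists_finsupp _ x).1 (hspan ▸ Submodule.mem_top)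
  let y : ∀ μ, eigenspace T μ := fun μ => ⟨f μ, hf μ⟩
  have hnorm : ∑ μ ∈ f.support, ‖y μ‖ ^ 2 = 1 := by
    rw [← hT.norm_sum y f.support, ← one_pow 2, ← hx]
    rfl
  have hinner := inner_sum_apply_sum_of_mem_eigenspace hT f.support y
  refine hinner ▸ (convex_convexHull ℝ _).sum_mem (fun _ _ => by positivity) hnorm fun μ hμ => ?_
  exact subset_convexHull ℝ _
    (hasEigenvalue_of_hasEigenvector ⟨hf μ, Finsupp.mem_support_iff.1 hμ⟩)

theorem numericalRange_eq_convexHull_eigenvalues (hspan : ⨆ μ, eigenspace T μ = ⊤) :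
    numericalRange T = convexHull ℝ {μ | HasEigenvalue T μ} :=
  (numericalRange_subset_convexHull_eigenvalues hT hspan).antisymm
    (convexHull_eigenvalues_subset_numericalRange hT)

end Orthogonal

theorem numericalRange_eq_convexHull_of_pow_eq_one {T : E →ₗᵢ[𝕜] E} {a : 𝕜} {n : ℕ} (hn : 0 < n)
    (ha : IsPrimitiveRoot a n) (hT : T.toLinearMap ^ n = 1) :
    numericalRange T.toLinearMap = convexHull ℝ {μ | HasEigenvalue T.toLinearMap μ} :=
  numericalRange_eq_convexHull_eigenvalues (orthogonalFamily_eigenspaces_isometry T)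
    (iSup_eigenspace_eq_top_of_pow_eq_one hn ha hT)

end NumericalRange

section Fock

open Module.End ComplexConjugate

theorem measurePreserving_gaussMeasure (e : ℂ ≃ₗᵢ[ℝ] ℂ) :
    MeasurePreserving e gaussMeasure gaussMeasure := by
  have he := e.measurePreserving
  refine ⟨he.measurable, Measure.ext fun s hs => ?_⟩
  rw [Measure.map_apply he.measurable hs, gaussMeasure,
    withDensity_apply _ (he.measurable hs), withDensity_apply _ hs,
    ← he.setLIntegral_comp_preimage hs (by fun_prop)]
  simp only [e.norm_map]

instance : gaussMeasure.IsOpenPosMeasure :=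
  (withDensity_absolutelyContinuous' (by fun_prop)
    (.of_forall fun z => by positivity)).isOpenPosMeasure

theorem memFock_iff {f : ℂ → ℂ} : MemFock f ↔ Entire f ∧ MemLp f 2 gaussMeasure :=
  and_congr_right fun hf =>
    (memLp_two_iff_integrable_sq_norm hf.continuous.aestronglyMeasurable).symm

theorem fockInner_self (f : ℂ → ℂ) : fockInner f f = fockNormSq f := by
  simp only [fockInner, fockNormSq, Complex.mul_conj, Complex.normSq_eq_norm_sq]
  exact integral_ofReal

theorem MemFock.eq_zero_of_fockNormSq_eq_zero {f : ℂ → ℂ} (hf : MemFock f)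
    (h : fockNormSq f = 0) : f = 0 := by
  have hae : (fun z => ‖f z‖ ^ 2) =ᵐ[gaussMeasure] 0 :=
    (integral_eq_zero_iff_of_nonneg (fun z => by positivity) hf.2).1 h
  refine hf.1.continuous.ae_eq_iff_eq gaussMeasure continuous_zero |>.1 ?_
  filter_upwards [hae] with z hz
  simpa using hz

theorem fockNormSq_comp_circle_mul (c : Circle) (f : ℂ → ℂ) :
    fockNormSq (fun z => f (c * z)) = fockNormSq f :=
  (measurePreserving_gaussMeasure (rotation c)).integral_comp
    (rotation c).toHomeomorph.measurableEmbedding fun z => ‖f z‖ ^ 2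

theorem MemFock.comp_circle_mul {f : ℂ → ℂ} (hf : MemFock f) (c : Circle) :
    MemFock fun z => f (c * z) := memFock_iff.2
  ⟨Differentiable.comp hf.1 (differentiable_id.const_mul (c : ℂ)),
    (memFock_iff.1 hf).2.comp_measurePreserving (measurePreserving_gaussMeasure (rotation c))⟩

theorem integral_gaussMeasure {E : Type*} [NormedAddCommGroup E] [NormedSpace ℝ E] (F : ℂ → E) :
    ∫ z, F z ∂gaussMeasure = ∫ z, (Real.exp (-(‖z‖ ^ 2)) / Real.pi) • F z := by
  rw [gaussMeasure, integral_withDensity_eq_integral_toReal_smul (by fun_prop) (by simp)]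
  refine integral_congr_ae (.of_forall fun z => ?_)
  exact congrArg (· • F z) (ENNReal.toReal_ofReal (by positivity))

theorem fockNormSq_pow (k : ℕ) : fockNormSq (fun z => z ^ k) = k.factorial := by
  have h := Complex.integral_rpow_mul_exp_neg_rpow (p := 2) (q := (2 * k : ℕ)) one_le_two
    (by linarith [(2 * k : ℕ).cast_nonneg (α := ℝ)])
  calc fockNormSq (fun z => z ^ k)
      = Real.pi⁻¹ * ∫ z : ℂ, ‖z‖ ^ ((2 * k : ℕ) : ℝ) * Real.exp (-‖z‖ ^ (2 : ℝ)) := by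
        rw [fockNormSq, integral_gaussMeasure, ← integral_const_mul]
        refine integral_congr_ae (.of_forall fun z => ?_)
        simp only [smul_eq_mul, Real.rpow_natCast, Real.rpow_two, norm_pow]
        ring
    _ = Real.Gamma (k + 1) := by
        rw [h]
        have hk : (((2 * k : ℕ) : ℝ) + 2) / 2 = k + 1 := by push_cast; ring
        rw [hk]
        field_simp
    _ = k.factorial := Real.Gamma_nat_eq_factorial k

theorem memFock_pow (k : ℕ) : MemFock fun z => z ^ k :=
  ⟨differentiable_pow k, .of_integral_ne_zero <|
    (fockNormSq_pow k).trans_ne <| mod_cast k.factorial_ne_zero⟩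

/-- The members of the Fock space, as a linear subspace of the space of all functions `ℂ → ℂ`. -/
def fockSubmodule : Submodule ℂ (ℂ → ℂ) where
  carrier := {f | MemFock f}
  zero_mem' := memFock_iff.2 ⟨differentiable_const 0, MemLp.zero⟩
  add_mem' hf hg := memFock_iff.2
    ⟨hf.1.add hg.1, (memFock_iff.1 hf).2.add (memFock_iff.1 hg).2⟩
  smul_mem' c _ hf := memFock_iff.2 ⟨hf.1.const_smul c, (memFock_iff.1 hf).2.const_smul c⟩

/-- The Fock space `F²` as an inner product space. A type synonym of `fockSubmodule`, so that the
topology of the Fock norm does not compete with the one of pointwise convergence. -/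
def FockSpace : Type := fockSubmodule

namespace FockSpace

instance : AddCommGroup FockSpace := inferInstanceAs (AddCommGroup fockSubmodule)

instance : Module ℂ FockSpace := inferInstanceAs (Module ℂ fockSubmodule)

instance : FunLike FockSpace ℂ ℂ where
  coe := Subtype.val
  coe_injective := Subtype.val_injective

theorem memFock (f : FockSpace) : MemFock f := Subtype.property f

theorem integrable_mul_conj (f g : FockSpace) :
    Integrable (fun z => f z * conj (g z)) gaussMeasure :=
  (memFock_iff.1 f.memFock).2.integrable_mul (memFock_iff.1 g.memFock).2.star

/-- The inner product of the Fock space. `fockInner` is linear in its first argument, Mathlib's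
inner products in their second, whence the swap. -/
noncomputable abbrev innerCore : InnerProductSpace.Core ℂ FockSpace where
  inner f g := fockInner g f
  conj_inner_symm f g := by
    simp only [fockInner, ← integral_conj, map_mul, RingHomCompTriple.comp_apply, RingHom.id_apply,
      mul_comm]
  re_inner_nonneg f := by
    rw [fockInner_self]
    exact integral_nonneg fun z => by positivity
  add_left f g h := by
    rw [fockInner, fockInner, fockInner,
      ← integral_add (h.integrable_mul_conj f) (h.integrable_mul_conj g)]
    refine integral_congr_ae (.of_forall fun z => ?_)
    change h z * conj (f z + g z) = _
    rw [map_add, mul_add]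
  smul_left f g c := by
    rw [fockInner, fockInner, ← integral_const_mul]
    refine integral_congr_ae (.of_forall fun z => ?_)
    change g z * conj (c * f z) = _
    rw [map_mul, mul_left_comm]
  definite f h := by
    rw [fockInner_self, Complex.ofReal_eq_zero] at h
    exact DFunLike.coe_injective (f.memFock.eq_zero_of_fockNormSq_eq_zero h)

noncomputable instance : NormedAddCommGroup FockSpace := innerCore.toNormedAddCommGroup

noncomputable instance : InnerProductSpace ℂ FockSpace := .ofCore innerCore.toCore

theorem norm_sq_eq (f : FockSpace) : ‖f‖ ^ 2 = fockNormSq f := by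
  have h : (‖f‖ : ℂ) ^ 2 = fockNormSq f := by
    rw [← fockInner_self]
    exact (inner_self_eq_norm_sq_to_K (𝕜 := ℂ) f).symm
  exact_mod_cast h

theorem inner_def (f g : FockSpace) : inner ℂ f g = fockInner g f := rfl

theorem norm_eq_one_iff (f : FockSpace) : ‖f‖ = 1 ↔ fockNormSq f = 1 := by
  rw [← norm_sq_eq, pow_eq_one_iff_of_nonneg (norm_nonneg f) two_ne_zero]

/-- The unweighted composition operator `C_{cz}` on the Fock space, for `c` on the unit circle. -/
noncomputable def rotate (c : Circle) : FockSpace →ₗᵢ[ℂ] FockSpace where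
  toFun f := ⟨fun z => f (c * z), f.memFock.comp_circle_mul c⟩
  map_add' _ _ := rfl
  map_smul' _ _ := rfl
  norm_map' f := by
    rw [← sq_eq_sq₀ (norm_nonneg _) (norm_nonneg _), norm_sq_eq, norm_sq_eq]
    exact fockNormSq_comp_circle_mul c f

theorem rotate_apply (c : Circle) (f : FockSpace) (z : ℂ) : rotate c f z = f (c * z) := rfl

theorem rotate_pow_apply (c : Circle) (n : ℕ) (f : FockSpace) (z : ℂ) :
    ((rotate c).toLinearMap ^ n) f z = f ((c : ℂ) ^ n * z) := by
  induction n generalizing z with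
  | zero => simp
  | succ n ih =>
    rw [pow_succ', mul_apply, LinearIsometry.coe_toLinearMap, rotate_apply, ih, pow_succ, mul_assoc]

theorem rotate_pow_eq_one {c : Circle} {n : ℕ} (hc : (c : ℂ) ^ n = 1) :
    (rotate c).toLinearMap ^ n = 1 :=
  LinearMap.ext fun f => DFunLike.ext _ _ fun z => by
    rw [rotate_pow_apply, hc, one_mul, one_apply]

/-- The monomial `z ^ k` as an element of the Fock space. -/
def monomial (k : ℕ) : FockSpace := ⟨fun z => z ^ k, memFock_pow k⟩

theorem monomial_ne_zero (k : ℕ) : monomial k ≠ 0 := fun h =>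
  one_ne_zero ((one_pow k).symm.trans (DFunLike.congr_fun h 1))

theorem hasEigenvector_rotate_monomial (c : Circle) (k : ℕ) :
    HasEigenvector (rotate c).toLinearMap ((c : ℂ) ^ k) (monomial k) :=
  hasEigenvector_iff.2 ⟨mem_eigenspace_iff.2 (DFunLike.ext _ _ fun z => mul_pow (c : ℂ) z k),
    monomial_ne_zero k⟩

theorem setOf_hasEigenvalue_rotate {c : Circle} {n : ℕ} (hn : 0 < n)
    (hc : IsPrimitiveRoot (c : ℂ) n) :
    {μ | HasEigenvalue (rotate c).toLinearMap μ} = (fun k : ℕ => (c : ℂ) ^ k) '' {k | k < n} := by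
  have : NeZero n := .of_pos hn
  ext μ
  constructor
  · intro hμ
    exact hc.eq_pow_of_pow_eq_one
      (pow_eq_one_of_hasEigenvalue (rotate_pow_eq_one hc.pow_eq_one) hμ)
  · rintro ⟨k, -, rfl⟩
    exact hasEigenvalue_of_hasEigenvector (hasEigenvector_rotate_monomial c k)

end FockSpace

theorem numRange_eq_numericalRange {ψ φ : ℂ → ℂ} {T : Module.End ℂ FockSpace}
    (hT : ∀ f, ⇑(T f) = wcomp ψ φ f) : numRange ψ φ = numericalRange T := by
  have hinner (f : FockSpace) : fockInner (wcomp ψ φ f) f = inner ℂ f (T f) := by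
    rw [FockSpace.inner_def, hT]
  ext w
  constructor
  · rintro ⟨f, hf, hnorm, rfl⟩
    exact ⟨⟨f, hf⟩, (FockSpace.norm_eq_one_iff _).2 hnorm, (hinner ⟨f, hf⟩).symm⟩
  · rintro ⟨f, hnorm, rfl⟩
    exact ⟨f, f.memFock, (FockSpace.norm_eq_one_iff f).1 hnorm, (hinner f).symm⟩

end Fock

/-- If `|a| = 1` and `a ≠ 1` is a primitive `n`-th root of unity, the numerical range of
`C_{az}` on `F²` is the convex hull of `{1, a, …, a^{n-1}}`. -/
theorem numRange_Caz_primitive_root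
    (a : ℂ) (ha : ‖a‖ = 1) (ha1 : a ≠ 1) (n : ℕ) (hn : 0 < n)
    (hprim : a ^ n = 1) (hmin : ∀ k : ℕ, 0 < k → k < n → a ^ k ≠ 1) :
    numRange (fun _ => 1) (fun z => a * z) =
      convexHull ℝ ((fun k : ℕ => a ^ k) '' {k | k < n}) := by
  have hroot : IsPrimitiveRoot a n := .mk_of_lt a hn hprim hmin
  obtain ⟨c, rfl⟩ : ∃ c : Circle, (c : ℂ) = a := ⟨⟨a, mem_sphere_zero_iff_norm.2 ha⟩, rfl⟩
  have hC : ∀ f, ⇑(FockSpace.rotate c f) = wcomp (fun _ => 1) (fun z => c * z) f :=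
    fun f => funext fun z => (one_mul _).symm
  calc numRange (fun _ => 1) (fun z => c * z)
      = numericalRange (FockSpace.rotate c).toLinearMap := numRange_eq_numericalRange hC
    _ = convexHull ℝ {μ | Module.End.HasEigenvalue (FockSpace.rotate c).toLinearMap μ} :=
        numericalRange_eq_convexHull_of_pow_eq_one hn hroot (FockSpace.rotate_pow_eq_one hprim)
    _ = convexHull ℝ ((fun k : ℕ => (c : ℂ) ^ k) '' {k | k < n}) := by
        rw [FockSpace.setOf_hasEigenvalue_rotate hn hroot]
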